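/- Let R be the quotient of ℂ⟨e1,e2,e3⟩ by the two-sided ideal generated by e1e2 + e2e1 − e3, e1e3 + e3e1 − e2, and e2e3 + e3e2. Then h_0 = h_1 = h_2 = h_3 = 1 and h_n = 0 for all n ≥ 4. -/

import Mathlib

open CategoryTheory FreeAlgebra

/-- `Ext^m_R(ℂ,ℂ)` as a ℂ-module, where `ℂ` is an `R`-module via the augmentation `ε`. -/
noncomputable def extC (R : Type) [Ring R] [Algebra ℂ R] (ε : R →ₐ[ℂ] ℂ) (m : ℕ) :
    ModuleCat ℂ :=
  letI : Module R ℂ := Module.compHom ℂ ε.toRingHom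
  ((Ext ℂ (ModuleCat R) m).obj (Opposite.op (ModuleCat.of R ℂ))).obj (ModuleCat.of R ℂ)

/-- `h_m = dim_ℂ Ext^m_R(ℂ,ℂ)`. -/
noncomputable def extDim (R : Type) [Ring R] [Algebra ℂ R] (ε : R →ₐ[ℂ] ℂ) (m : ℕ) : ℕ :=
  Module.finrank ℂ (extC R ε m)

/-- Relations: `e1e2 + e2e1 = e3`, `e1e3 + e3e1 = e2`, `e2e3 + e3e2 = 0`. -/
inductive CRel : FreeAlgebra ℂ (Fin 3) → FreeAlgebra ℂ (Fin 3) → Prop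
  | r12 : CRel (ι ℂ 0 * ι ℂ 1 + ι ℂ 1 * ι ℂ 0) (ι ℂ 2)
  | r13 : CRel (ι ℂ 0 * ι ℂ 2 + ι ℂ 2 * ι ℂ 0) (ι ℂ 1)
  | r23 : CRel (ι ℂ 1 * ι ℂ 2 + ι ℂ 2 * ι ℂ 1) 0

set_option linter.unusedSimpArgs false
namespace Col

/-- The algebra `R` (a type synonym, to keep its instances opaque). -/
def R : Type := RingQuot CRel
noncomputable instance instRingR : Ring R := inferInstanceAs (Ring (RingQuot CRel))
noncomputable instance instAlgR : Algebra ℂ R := inferInstanceAs (Algebra ℂ (RingQuot CRel))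
noncomputable def mk : FreeAlgebra ℂ (Fin 3) →ₐ[ℂ] R := RingQuot.mkAlgHom ℂ CRel
noncomputable def x : R := mk (ι ℂ 0)
noncomputable def y : R := mk (ι ℂ 1)
noncomputable def z : R := mk (ι ℂ 2)

lemma rxy : x * y + y * x = z := by
  have : mk _ = mk _ := RingQuot.mkAlgHom_rel ℂ CRel.r12
  simp only [map_add, map_mul, map_zero] at this
  exact this
lemma rxz : x * z + z * x = y := by
  have : mk _ = mk _ := RingQuot.mkAlgHom_rel ℂ CRel.r13
  simp only [map_add, map_mul, map_zero] at this
  exact this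
lemma ryz : y * z + z * y = 0 := by
  have : mk _ = mk _ := RingQuot.mkAlgHom_rel ℂ CRel.r23
  simp only [map_add, map_mul, map_zero] at this
  exact this

/-- Induction by left multiplication with generators. -/
lemma R_ind (p : R → Prop) (h1 : p 1) (hadd : ∀ a b, p a → p b → p (a + b))
    (hsmul : ∀ (c : ℂ) a, p a → p (c • a))
    (hx : ∀ a, p a → p (x * a)) (hy : ∀ a, p a → p (y * a)) (hz : ∀ a, p a → p (z * a)) (a : R) :
    p a := by
  obtain ⟨f, rfl⟩ : ∃ f, mk f = a := RingQuot.mkAlgHom_surjective ℂ CRel a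
  suffices ∀ (f : FreeAlgebra ℂ (Fin 3)) (b : R), p b → p (mk f * b) by
    simpa using this f 1 h1
  intro f
  induction f using FreeAlgebra.induction with
  | grade0 c => 
    intro b hb
    rw [AlgHom.commutes, ← Algebra.smul_def]
    exact hsmul c b hb
  | grade1 i =>
    intro b hb
    fin_cases i
    · exact hx b hb
    · exact hy b hb
    · exact hz b hb
  | mul f g hf hg =>
    intro b hb
    rw [map_mul, mul_assoc]
    exact hf _ (hg _ hb)
  | add f g hf hg =>
    intro b hb
    rw [map_add, add_mul]
    exact hadd _ _ (hf _ hb) (hg _ hb)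

/-- Universal property. -/
lemma exists_lift {A : Type} [Ring A] [Algebra ℂ A] (X Y Z : A) (h1 : X * Y + Y * X = Z)
    (h2 : X * Z + Z * X = Y) (h3 : Y * Z + Z * Y = 0) :
    ∃ φ : R →ₐ[ℂ] A, φ x = X ∧ φ y = Y ∧ φ z = Z := by
  have hr : ∀ ⦃a b⦄, CRel a b → FreeAlgebra.lift ℂ ![X, Y, Z] a = FreeAlgebra.lift ℂ ![X, Y, Z] b := by
    intro a b h
    cases h <;> simp [h1, h2, h3]
  let φ : R →ₐ[ℂ] A := RingQuot.liftAlgHom ℂ ⟨FreeAlgebra.lift ℂ ![X, Y, Z], hr⟩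
  have hφ : ∀ f, φ (mk f) = FreeAlgebra.lift ℂ ![X, Y, Z] f :=
    fun f => RingQuot.liftAlgHom_mkAlgHom_apply ℂ _ hr f
  exact ⟨φ, by simp [x, hφ], by simp [y, hφ], by simp [z, hφ]⟩

open Polynomial

/-! ### F3 -/

lemma mod_yz (a : R) : ∃ (p : ℂ[X]) (b c : R), a = aeval x p + b * y + c * z := by
  have key : ∀ p : ℂ[X], (∃ b c : R, y * aeval x p = b * y + c * z) ∧
      (∃ b c : R, z * aeval x p = b * y + c * z) := by
    intro p
    induction p using Polynomial.induction_on' with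
    | add p q hp hq =>
      obtain ⟨⟨b, c, h⟩, b', c', h'⟩ := hp
      obtain ⟨⟨b1, c1, h1⟩, b1', c1', h1'⟩ := hq
      refine ⟨⟨b + b1, c + c1, ?_⟩, b' + b1', c' + c1', ?_⟩
      · rw [map_add, mul_add, h, h1]; noncomm_ring
      · rw [map_add, mul_add, h', h1']; noncomm_ring
    | monomial n c =>
      induction n with
      | zero =>
        refine ⟨⟨algebraMap ℂ R c, 0, ?_⟩, 0, algebraMap ℂ R c, ?_⟩
        · simp [Algebra.commutes]
        · simp [Algebra.commutes]
      | succ n ih =>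
        obtain ⟨⟨b, d, h⟩, b', d', h'⟩ := ih
        have e : aeval x (monomial (n+1) c) = x * aeval x (monomial n c) := by
          rw [← X_mul_monomial, map_mul, aeval_X]
        have e1 : y * x = z - x * y := by rw [← rxy]; noncomm_ring
        have e2 : z * x = y - x * z := by rw [← rxz]; noncomm_ring
        refine ⟨⟨b' - x * b, d' - x * d, ?_⟩, b - x * b', d - x * d', ?_⟩
        · rw [e, ← mul_assoc, e1, sub_mul, mul_assoc, h, h']; noncomm_ring
        · rw [e, ← mul_assoc, e2, sub_mul, mul_assoc, h, h']; noncomm_ring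
  induction a using R_ind with
  | h1 => exact ⟨1, 0, 0, by simp⟩
  | hadd a b ha hb =>
    obtain ⟨p, b1, c1, rfl⟩ := ha
    obtain ⟨q, b2, c2, rfl⟩ := hb
    exact ⟨p + q, b1 + b2, c1 + c2, by rw [map_add]; noncomm_ring⟩
  | hsmul c a ha =>
    obtain ⟨p, b1, c1, rfl⟩ := ha
    exact ⟨c • p, c • b1, c • c1, by simp [smul_add]⟩
  | hx a ha =>
    obtain ⟨p, b1, c1, rfl⟩ := ha
    exact ⟨X * p, x * b1, x * c1, by simp; noncomm_ring⟩
  | hy a ha =>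
    obtain ⟨p, b1, c1, rfl⟩ := ha
    obtain ⟨⟨b, c, h⟩, -⟩ := key p
    exact ⟨0, b + y * b1, c + y * c1, by rw [mul_add, mul_add, h]; simp; noncomm_ring⟩
  | hz a ha =>
    obtain ⟨p, b1, c1, rfl⟩ := ha
    obtain ⟨-, ⟨b, c, h⟩⟩ := key p
    exact ⟨0, b + z * b1, c + z * c1, by rw [mul_add, mul_add, h]; simp; noncomm_ring⟩

lemma F3 (a b c : R) (h : a * x + b * y + c * z = 0) : ∃ p q : R, a = p * y + q * z := by
  obtain ⟨φ, hx, hy, hz⟩ := exists_lift (A := ℂ[X]) X 0 0 (by simp) (by simp) (by simp)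
  obtain ⟨p, b1, c1, rfl⟩ := mod_yz a
  have h2 := congrArg φ h
  have h3 : φ (aeval x p) = p := by
    rw [← Polynomial.aeval_algHom_apply, hx]; simp
  simp only [map_add, map_mul, hx, hy, hz, h3, mul_zero, add_zero, map_zero] at h2
  have : p = 0 := by simpa using h2
  subst this
  exact ⟨b1, c1, by simp⟩

/-! ### The PBW model -/

abbrev V := (ℕ × ℕ) →₀ ℂ[X]

noncomputable def Uo : V →ₗ[ℂ] V := Finsupp.lsum ℂ fun bc =>
  (Finsupp.lsingle (bc.1 + 1, bc.2) + (-1 : ℂ) ^ bc.1 • Finsupp.lsingle (bc.1, bc.2 + 1)) ∘ₗ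
    (aeval (1 - X : ℂ[X])).toLinearMap
noncomputable def Vo : V →ₗ[ℂ] V := Finsupp.lsum ℂ fun bc =>
  (Finsupp.lsingle (bc.1 + 1, bc.2) - (-1 : ℂ) ^ bc.1 • Finsupp.lsingle (bc.1, bc.2 + 1)) ∘ₗ
    (aeval (-1 - X : ℂ[X])).toLinearMap
noncomputable def Xo : V →ₗ[ℂ] V := Finsupp.lsum ℂ fun bc =>
  Finsupp.lsingle bc ∘ₗ LinearMap.mulLeft ℂ X
/-- right multiplication by `z` -/
noncomputable def RZ : V →ₗ[ℂ] V := Finsupp.lsum ℂ fun bc => Finsupp.lsingle (bc.1, bc.2 + 1)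
/-- right multiplication by `y` -/
noncomputable def RY : V →ₗ[ℂ] V := Finsupp.lsum ℂ fun bc =>
  (-1 : ℂ) ^ bc.2 • Finsupp.lsingle (bc.1 + 1, bc.2)

lemma Uo_s (b c : ℕ) (p : ℂ[X]) : Uo (Finsupp.single (b, c) p) =
    Finsupp.single (b + 1, c) (aeval (1 - X : ℂ[X]) p) +
      (-1 : ℂ) ^ b • Finsupp.single (b, c + 1) (aeval (1 - X : ℂ[X]) p) := by
  simp [Uo]
lemma Vo_s (b c : ℕ) (p : ℂ[X]) : Vo (Finsupp.single (b, c) p) =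
    Finsupp.single (b + 1, c) (aeval (-1 - X : ℂ[X]) p) -
      (-1 : ℂ) ^ b • Finsupp.single (b, c + 1) (aeval (-1 - X : ℂ[X]) p) := by
  simp [Vo]
lemma Xo_s (b c : ℕ) (p : ℂ[X]) : Xo (Finsupp.single (b, c) p) =
    Finsupp.single (b, c) (X * p) := by
  simp [Xo]
lemma RZ_s (b c : ℕ) (p : ℂ[X]) : RZ (Finsupp.single (b, c) p) =
    Finsupp.single (b, c + 1) p := by
  simp [RZ]
lemma RY_s (b c : ℕ) (p : ℂ[X]) : RY (Finsupp.single (b, c) p) =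
    (-1 : ℂ) ^ c • Finsupp.single (b + 1, c) p := by
  simp [RY]

lemma V_ext {M : Type} [AddCommMonoid M] [Module ℂ M] {f g : V →ₗ[ℂ] M}
    (h : ∀ b c p, f (Finsupp.single (b, c) p) = g (Finsupp.single (b, c) p)) : f = g := by
  refine Finsupp.lhom_ext' fun bc => LinearMap.ext fun p => ?_
  exact h bc.1 bc.2 p

lemma comp1 (p : ℂ[X]) : aeval (1 - X : ℂ[X]) (aeval (1 - X : ℂ[X]) p) = p := by
  rw [← Polynomial.aeval_algHom_apply]; simp
lemma comp2 (p : ℂ[X]) : aeval (-1 - X : ℂ[X]) (aeval (-1 - X : ℂ[X]) p) = p := by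
  rw [← Polynomial.aeval_algHom_apply]; simp

lemma UX : Uo * Xo = (1 - Xo) * Uo := by
  apply V_ext; intro b c p
  simp only [Module.End.mul_apply, Xo_s, Uo_s, map_mul, aeval_X, LinearMap.sub_apply,
    Module.End.one_apply, map_add, map_smul, sub_mul, one_mul, Finsupp.single_sub]
  try module
lemma VX : Vo * Xo = (-1 - Xo) * Vo := by
  apply V_ext; intro b c p
  simp only [Module.End.mul_apply, Xo_s, Vo_s, map_mul, aeval_X, LinearMap.sub_apply, LinearMap.neg_apply,
    Module.End.one_apply, map_add, map_sub, map_smul, sub_mul, one_mul, neg_mul, Finsupp.single_sub, Finsupp.single_neg]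
  try module
lemma UU : Uo * Uo = Vo * Vo := by
  apply V_ext; intro b c p
  simp only [Module.End.mul_apply, Vo_s, Uo_s, map_add, map_sub, map_smul, comp1, comp2, pow_succ]
  module

lemma UZ : Uo * RZ = RZ * Uo := by
  apply V_ext; intro b c p
  simp only [Module.End.mul_apply, RZ_s, Uo_s, map_add, map_sub, map_smul, pow_succ]
lemma VZ : Vo * RZ = RZ * Vo := by
  apply V_ext; intro b c p
  simp only [Module.End.mul_apply, RZ_s, Vo_s, map_add, map_sub, map_smul, pow_succ]
lemma XZ : Xo * RZ = RZ * Xo := by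
  apply V_ext; intro b c p
  simp only [Module.End.mul_apply, RZ_s, Xo_s, map_add, map_sub, map_smul, pow_succ]
lemma UY : Uo * RY = RY * Uo := by
  apply V_ext; intro b c p
  simp only [Module.End.mul_apply, RY_s, Uo_s, map_add, map_sub, map_smul, pow_succ]
  module
lemma VY : Vo * RY = RY * Vo := by
  apply V_ext; intro b c p
  simp only [Module.End.mul_apply, RY_s, Vo_s, map_add, map_sub, map_smul, pow_succ]
  module
lemma XY : Xo * RY = RY * Xo := by
  apply V_ext; intro b c p
  simp only [Module.End.mul_apply, RY_s, Xo_s, map_add, map_sub, map_smul, pow_succ]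

lemma rep_aux {A : Type} [Ring A] [Algebra ℂ A] (X U V : A) (h1 : U * X = (1 - X) * U)
    (h2 : V * X = (-1 - X) * V) (h3 : U * U = V * V) :
    ∃ ρ : R →ₐ[ℂ] A, ρ x = X ∧ ρ (y + z) = U ∧ ρ (y - z) = V := by
  obtain ⟨φ, hx, hy, hz⟩ := exists_lift X ((1/2 : ℂ) • (U + V)) ((1/2 : ℂ) • (U - V))
    (by
      rw [mul_smul_comm, smul_mul_assoc, mul_add, add_mul, h1, h2]
      rw [← smul_add]; congr 1; noncomm_ring)
    (by
      rw [mul_smul_comm, smul_mul_assoc, mul_sub, sub_mul, h1, h2]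
      rw [← smul_add]; congr 1; noncomm_ring)
    (by
      simp only [mul_smul_comm, smul_mul_assoc, ← smul_add]
      have : (U + V) * (U - V) + (U - V) * (U + V) = 0 := by
        have : (U + V) * (U - V) + (U - V) * (U + V) = 2 • (U * U - V * V) := by
          noncomm_ring
        rw [this, h3]; simp
      rw [this]; simp)
  refine ⟨φ, hx, ?_, ?_⟩
  · rw [map_add, hy, hz]; module
  · rw [map_sub, hy, hz]; module

lemma exists_rep : ∃ ρ : R →ₐ[ℂ] Module.End ℂ V, ρ x = Xo ∧ ρ (y + z) = Uo ∧ ρ (y - z) = Vo :=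
  rep_aux Xo Uo Vo UX VX UU

noncomputable def ρ : R →ₐ[ℂ] Module.End ℂ V := exists_rep.choose
lemma ρx : ρ x = Xo := exists_rep.choose_spec.1
lemma ρu : ρ (y + z) = Uo := exists_rep.choose_spec.2.1
lemma ρv : ρ (y - z) = Vo := exists_rep.choose_spec.2.2

lemma y_eq : y = (1/2 : ℂ) • ((y + z) + (y - z)) := by module
lemma z_eq : z = (1/2 : ℂ) • ((y + z) - (y - z)) := by module

lemma R_ind' (p : R → Prop) (h1 : p 1) (hadd : ∀ a b, p a → p b → p (a + b))
    (hsmul : ∀ (c : ℂ) a, p a → p (c • a))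
    (hx : ∀ a, p a → p (x * a)) (hu : ∀ a, p a → p ((y + z) * a))
    (hv : ∀ a, p a → p ((y - z) * a)) (a : R) :
    p a := by
  refine R_ind p h1 hadd hsmul hx ?_ ?_ a
  · intro a ha
    have := hsmul (1/2) _ (hadd _ _ (hu a ha) (hv a ha))
    rwa [← add_mul, ← smul_mul_assoc, ← y_eq] at this
  · intro a ha
    have := hsmul (1/2) _ (hadd _ _ (hu a ha) (hsmul (-1) _ (hv a ha)))
    rwa [neg_one_smul, ← sub_eq_add_neg, ← sub_mul, ← smul_mul_assoc, ← z_eq] at this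

lemma ρ_comm (T : Module.End ℂ V) (hx : Xo * T = T * Xo) (hu : Uo * T = T * Uo)
    (hv : Vo * T = T * Vo) (a : R) : ρ a * T = T * ρ a := by
  induction a using R_ind' with
  | h1 => simp
  | hadd a b ha hb => rw [map_add, add_mul, ha, hb, mul_add]
  | hsmul c a ha => rw [map_smul, smul_mul_assoc, ha, mul_smul_comm]
  | hx a ha => rw [map_mul, mul_assoc, ha, ← mul_assoc, ρx, hx, mul_assoc]
  | hu a ha => rw [map_mul, mul_assoc, ha, ← mul_assoc, ρu, hu, mul_assoc]
  | hv a ha => rw [map_mul, mul_assoc, ha, ← mul_assoc, ρv, hv, mul_assoc]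

noncomputable def e0 : V := Finsupp.single (0, 0) 1
noncomputable def Ψ : R →ₗ[ℂ] V := (LinearMap.applyₗ e0) ∘ₗ ρ.toLinearMap
lemma Ψ_apply (a : R) : Ψ a = ρ a e0 := rfl

lemma Ψ_z (a : R) : Ψ (a * z) = RZ (Ψ a) := by
  have : ρ z e0 = RZ e0 := by
    rw [z_eq, map_smul, map_sub, ρu, ρv]
    simp only [LinearMap.smul_apply, LinearMap.sub_apply, e0, Uo_s, Vo_s, RZ_s, map_one]
    module
  rw [Ψ_apply, map_mul, Module.End.mul_apply, this, Ψ_apply, ← Module.End.mul_apply,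
    ρ_comm _ XZ UZ VZ, Module.End.mul_apply]

lemma Ψ_y (a : R) : Ψ (a * y) = RY (Ψ a) := by
  have : ρ y e0 = RY e0 := by
    rw [y_eq, map_smul, map_add, ρu, ρv]
    simp only [LinearMap.smul_apply, LinearMap.add_apply, e0, Uo_s, Vo_s, RY_s, map_one]
    module
  rw [Ψ_apply, map_mul, Module.End.mul_apply, this, Ψ_apply, ← Module.End.mul_apply,
    ρ_comm _ XY UY VY, Module.End.mul_apply]

noncomputable def Φ : V →ₗ[ℂ] R := Finsupp.lsum ℂ fun bc =>
  LinearMap.mulRight ℂ (y ^ bc.1 * z ^ bc.2) ∘ₗ (aeval x).toLinearMap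
lemma Φ_s (b c : ℕ) (p : ℂ[X]) : Φ (Finsupp.single (b, c) p) = aeval x p * (y ^ b * z ^ c) := by
  simp [Φ, mul_assoc]

lemma comm_gen (w : R) (q : ℂ[X]) (h : w * x = aeval x q * w) (p : ℂ[X]) :
    w * aeval x p = aeval x (aeval q p) * w := by
  induction p using Polynomial.induction_on' with
  | add p q hp hq => simp only [map_add, mul_add, add_mul, hp, hq]
  | monomial n c =>
    induction n with
    | zero => simp [Algebra.commutes]
    | succ n ih =>
      have e : (monomial (n+1) c : ℂ[X]) = X * monomial n c := by
        rw [X_mul_monomial]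
      rw [e, map_mul, map_mul, map_mul, aeval_X, aeval_X, ← mul_assoc, h, mul_assoc, ih, mul_assoc]

lemma zy_pow (b : ℕ) : z * y ^ b = (-1 : ℂ) ^ b • (y ^ b * z) := by
  have e : z * y = - (y * z) := by rw [eq_neg_iff_add_eq_zero, add_comm]; exact ryz
  induction b with
  | zero => simp
  | succ n ih =>
    rw [pow_succ, ← mul_assoc, ih, smul_mul_assoc, mul_assoc, e, pow_succ (-1 : ℂ), mul_neg_one,
      neg_smul, mul_neg, smul_neg, ← mul_assoc]

lemma ux : (y + z) * x = aeval x (1 - X : ℂ[X]) * (y + z) := by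
  have e1 : y * x = z - x * y := by rw [← rxy]; noncomm_ring
  have e2 : z * x = y - x * z := by rw [← rxz]; noncomm_ring
  rw [add_mul, e1, e2]; simp; noncomm_ring
lemma vx : (y - z) * x = aeval x (-1 - X : ℂ[X]) * (y - z) := by
  have e1 : y * x = z - x * y := by rw [← rxy]; noncomm_ring
  have e2 : z * x = y - x * z := by rw [← rxz]; noncomm_ring
  rw [sub_mul, e1, e2]; simp; noncomm_ring

lemma Φ_X (v : V) : Φ (Xo v) = x * Φ v := by
  have : Φ ∘ₗ Xo = LinearMap.mulLeft ℂ x ∘ₗ Φ := by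
    apply V_ext; intro b c p
    simp only [LinearMap.comp_apply, LinearMap.mulLeft_apply, Xo_s, Φ_s, map_mul, aeval_X, mul_assoc]
  exact LinearMap.congr_fun this v
lemma Φ_U (v : V) : Φ (Uo v) = (y + z) * Φ v := by
  have : Φ ∘ₗ Uo = LinearMap.mulLeft ℂ (y + z) ∘ₗ Φ := by
    apply V_ext; intro b c p
    simp only [LinearMap.comp_apply, LinearMap.mulLeft_apply, Uo_s, map_add, map_smul, Φ_s]
    rw [← mul_assoc (y + z), comm_gen _ _ ux, mul_assoc, add_mul, ← mul_assoc z, zy_pow, mul_add,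
      ← mul_assoc y, ← pow_succ', smul_mul_assoc, mul_smul_comm, mul_assoc (y ^ b) z, ← pow_succ']
  exact LinearMap.congr_fun this v
lemma Φ_V (v : V) : Φ (Vo v) = (y - z) * Φ v := by
  have : Φ ∘ₗ Vo = LinearMap.mulLeft ℂ (y - z) ∘ₗ Φ := by
    apply V_ext; intro b c p
    simp only [LinearMap.comp_apply, LinearMap.mulLeft_apply, Vo_s, map_sub, map_smul, Φ_s]
    rw [← mul_assoc (y - z), comm_gen _ _ vx, mul_assoc, sub_mul, ← mul_assoc z, zy_pow, mul_sub,
      ← mul_assoc y, ← pow_succ', smul_mul_assoc, mul_smul_comm, mul_assoc (y ^ b) z, ← pow_succ']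
  exact LinearMap.congr_fun this v

lemma ΦΨ (a : R) : Φ (Ψ a) = a := by
  induction a using R_ind' with
  | h1 => rw [Ψ_apply, map_one, Module.End.one_apply, e0, Φ_s]; simp
  | hadd a b ha hb => rw [map_add, map_add, ha, hb]
  | hsmul c a ha => rw [map_smul, map_smul, ha]
  | hx a ha => rw [Ψ_apply, map_mul, Module.End.mul_apply, ρx, Φ_X, ← Ψ_apply, ha]
  | hu a ha => rw [Ψ_apply, map_mul, Module.End.mul_apply, ρu, Φ_U, ← Ψ_apply, ha]
  | hv a ha => rw [Ψ_apply, map_mul, Module.End.mul_apply, ρv, Φ_V, ← Ψ_apply, ha]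

lemma Φ_RZ (v : V) : Φ (RZ v) = Φ v * z := by
  have : Φ ∘ₗ RZ = LinearMap.mulRight ℂ z ∘ₗ Φ := by
    apply V_ext; intro b c p
    simp [RZ_s, Φ_s, mul_assoc, pow_succ]
  exact LinearMap.congr_fun this v

lemma RZ_coeff (v : V) (b c : ℕ) : RZ v (b, c + 1) = v (b, c) := by
  have : Finsupp.lapply (b, c + 1) ∘ₗ RZ = (Finsupp.lapply (b, c) : V →ₗ[ℂ] ℂ[X]) := by
    apply V_ext; intro b' c' p
    simp [RZ_s, Finsupp.single_apply]
  exact LinearMap.congr_fun this v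
lemma RZ_coeff0 (v : V) (b : ℕ) : RZ v (b, 0) = 0 := by
  have : Finsupp.lapply (b, 0) ∘ₗ RZ = (0 : V →ₗ[ℂ] ℂ[X]) := by
    apply V_ext; intro b' c' p
    simp [RZ_s, Finsupp.single_apply]
  exact LinearMap.congr_fun this v
lemma RY_coeff0 (v : V) (b : ℕ) : RY v (b + 1, 0) = v (b, 0) := by
  have : Finsupp.lapply (b + 1, 0) ∘ₗ RY = (Finsupp.lapply (b, 0) : V →ₗ[ℂ] ℂ[X]) := by
    apply V_ext; intro b' c' p
    rcases c' with _ | c' <;> simp [RY_s, Finsupp.single_apply]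
  exact LinearMap.congr_fun this v

lemma RZ_range (v : V) (h : ∀ b, v (b, 0) = 0) : ∃ w, v = RZ w := by
  refine ⟨Finsupp.comapDomain (fun bc : ℕ × ℕ => (bc.1, bc.2 + 1)) v ?_, ?_⟩
  · rintro ⟨a, b⟩ - ⟨c, d⟩ - h
    simpa using h
  · ext1 ⟨b, c⟩
    rcases c with _ | c
    · rw [RZ_coeff0, h]
    · rw [RZ_coeff]; rfl

lemma F1 (a : R) (h : a * z = 0) : a = 0 := by
  have h1 : RZ (Ψ a) = 0 := by rw [← Ψ_z, h, map_zero]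
  have : Ψ a = 0 := by
    ext1 ⟨b, c⟩
    rw [← RZ_coeff, h1]; rfl
  rw [← ΦΨ a, this, map_zero]

lemma F2 (a b : R) (h : a * y + b * z = 0) : ∃ r, a = r * z ∧ b = r * y := by
  have h1 : RY (Ψ a) + RZ (Ψ b) = 0 := by rw [← Ψ_z, ← Ψ_y, ← map_add, h, map_zero]
  obtain ⟨w, hw⟩ := RZ_range (Ψ a) (fun b => by
    have := DFunLike.congr_fun h1 (b + 1, 0)
    simpa [RZ_coeff0, RY_coeff0] using this)
  have ha : a = Φ w * z := by rw [← ΦΨ a, hw, Φ_RZ]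
  refine ⟨Φ w, ha, ?_⟩
  rw [← sub_eq_zero]
  apply F1
  have e : z * y = - (y * z) := by rw [eq_neg_iff_add_eq_zero, add_comm]; exact ryz
  rw [sub_mul, ← h, ha, mul_assoc, mul_assoc, e]; noncomm_ring

/-! ### Exactness -/

lemma ex3 (a b c : R) (h1 : a * y + b * z = 0) (h2 : a * x - b + c * z = 0) :
    ∃ r, a = r * z ∧ b = r * y ∧ c = r * x := by
  obtain ⟨r, rfl, rfl⟩ := F2 a b h1
  refine ⟨r, rfl, rfl, ?_⟩
  rw [← sub_eq_zero]
  apply F1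
  have e : y = x * z + z * x := rxz.symm
  have : (c - r * x) * z = (r * z * x - r * (x * z + z * x) + c * z) := by noncomm_ring
  rw [this, ← e, h2]

lemma ex2 (a b c : R) (h : a * x + b * y + c * z = 0) :
    ∃ p q r : R, a = p * y + q * z ∧ b = p * x - q + r * z ∧ c = -p + q * x + r * y := by
  obtain ⟨p, q, rfl⟩ := F3 a b c h
  have e1 : y * x = z - x * y := by rw [← rxy]; noncomm_ring
  have e2 : z * x = y - x * z := by rw [← rxz]; noncomm_ring
  have h' : (b - (p * x - q)) * y + (c - (-p + q * x)) * z = 0 := by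
    rw [← h, add_mul, mul_assoc p y, mul_assoc q z, e1, e2]; noncomm_ring
  obtain ⟨r, hr1, hr2⟩ := F2 _ _ h'
  exact ⟨p, q, r, rfl, by rw [← hr1]; abel, by rw [← hr2]; abel⟩

lemma ex1 (ε : R →ₐ[ℂ] ℂ) (hx : ε x = 0) (hy : ε y = 0) (hz : ε z = 0) (a : R) (h : ε a = 0) :
    ∃ p q r : R, a = p * x + q * y + r * z := by
  obtain ⟨p, b, c, rfl⟩ := mod_yz a
  have h3 : ε (aeval x p) = p.coeff 0 := by
    rw [← Polynomial.aeval_algHom_apply, hx, Polynomial.coeff_zero_eq_aeval_zero]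
  simp only [map_add, map_mul, hy, hz, h3, mul_zero, add_zero] at h
  refine ⟨aeval x p.divX, b, c, ?_⟩
  congr 2
  conv_lhs => rw [← Polynomial.divX_mul_X_add p, h]
  simp


/-! ### The resolution -/

section Hom

def kk : ℕ → ℕ
  | 0 => 1
  | 1 => 3
  | 2 => 3
  | 3 => 1
  | _ => 0

noncomputable def MM : ∀ n, Matrix (Fin (kk (n + 1))) (Fin (kk n)) R
  | 0 => (!![x; y; z] : Matrix (Fin 3) (Fin 1) R)
  | 1 => (!![y, x, -1; z, -1, x; 0, z, y] : Matrix (Fin 3) (Fin 3) R)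
  | 2 => (!![z, y, x] : Matrix (Fin 1) (Fin 3) R)
  | _ + 3 => 0

lemma MM_mul (n : ℕ) : MM (n + 1) * MM n = 0 := by
  have h1 := rxy
  have h2 := rxz
  have h3 := ryz
  rcases n with _ | _ | n
  · change (!![y, x, -1; z, -1, x; 0, z, y] : Matrix (Fin 3) (Fin 3) R) *
      (!![x; y; z] : Matrix (Fin 3) (Fin 1) R) = 0
    ext i j
    fin_cases i <;> fin_cases j <;> simp [Matrix.mul_apply, Fin.sum_univ_succ]
    · rw [← h1]; abel
    · rw [← h2]; abel
    · rw [← h3]; abel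
  · change (!![z, y, x] : Matrix (Fin 1) (Fin 3) R) *
      (!![y, x, -1; z, -1, x; 0, z, y] : Matrix (Fin 3) (Fin 3) R) = 0
    ext i j
    fin_cases i <;> fin_cases j <;> simp [Matrix.mul_apply, Fin.sum_univ_succ]
    · rw [← h3]; abel
    · rw [← h2]; abel
    · rw [← h1]; abel
  · change (0 : Matrix (Fin (kk (n + 2 + 1 + 1))) (Fin (kk (n + 2 + 1))) R) * MM (n + 2) = 0
    simp

noncomputable def XX (n : ℕ) : ModuleCat.{0} R := ModuleCat.of R (Fin (kk n) → R)

noncomputable def dd (n : ℕ) : XX (n + 1) ⟶ XX n := ModuleCat.ofHom (Matrix.toLinearMapRight' (MM n))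

lemma dd_apply (n : ℕ) (v : Fin (kk (n + 1)) → R) :
    (dd n).hom v = Matrix.vecMul v (MM n) := rfl

lemma dd_comp (n : ℕ) : dd (n + 1) ≫ dd n = 0 := by
  refine ModuleCat.hom_ext (LinearMap.ext fun (v : Fin (kk (n + 2)) → R) => ?_)
  change Matrix.vecMul (Matrix.vecMul v (MM (n + 1))) (MM n) = 0
  rw [Matrix.vecMul_vecMul, MM_mul, Matrix.vecMul_zero]

noncomputable def CC : ChainComplex (ModuleCat.{0} R) ℕ := ChainComplex.of XX dd dd_comp

variable (ε : R →ₐ[ℂ] ℂ)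

/-- the trivial module -/
noncomputable def TT : ModuleCat.{0} R :=
  letI : Module R ℂ := Module.compHom ℂ ε.toRingHom
  ModuleCat.of R ℂ

lemma TT_smul (r : R) (t : TT ε) : (r • t : TT ε) = (ε r * (show ℂ from t) : ℂ) := rfl

noncomputable def augL : XX 0 →ₗ[R] TT ε :=
  { toFun := fun (v : Fin 1 → R) => (ε (v 0) : ℂ)
    map_add' := fun v w => ε.map_add _ _
    map_smul' := fun r v => ε.map_mul _ _ }

noncomputable def aug : XX 0 ⟶ TT ε := ConcreteCategory.ofHom (C := ModuleCat R) (augL ε)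

lemma aug_apply (v : Fin 1 → R) : (aug ε).hom v = (ε (v 0) : ℂ) := rfl

lemma dd_aug (hx : ε x = 0) (hy : ε y = 0) (hz : ε z = 0) : dd 0 ≫ aug ε = 0 := by
  refine ModuleCat.hom_ext (LinearMap.ext fun (v : Fin 3 → R) => ?_)
  change ε (Matrix.vecMul (m := Fin 3) (n := Fin 1) v !![x; y; z] 0) = 0
  simp [Matrix.vecMul, dotProduct, Fin.sum_univ_succ, hx, hy, hz]

lemma aug_exact (hx : ε x = 0) (hy : ε y = 0) (hz : ε z = 0) (h : dd 0 ≫ aug ε = 0) :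
    (ShortComplex.mk (dd 0) (aug ε) h).Exact := by
  rw [ShortComplex.moduleCat_exact_iff]
  intro (v : Fin 1 → R) (hv : ε (v 0) = 0)
  obtain ⟨p, q, r, h⟩ := ex1 ε hx hy hz _ hv
  refine ⟨(![p, q, r] : Fin 3 → R), ?_⟩
  change Matrix.vecMul (m := Fin 3) (n := Fin 1) ![p, q, r] !![x; y; z] = v
  ext i
  fin_cases i
  simp [Matrix.vecMul, dotProduct, Fin.sum_univ_succ, h, add_assoc]

lemma aug_epi : Epi (aug ε) := by
  rw [ModuleCat.epi_iff_surjective]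
  intro (t : ℂ)
  refine ⟨(fun _ => algebraMap ℂ R t : Fin 1 → R), ?_⟩
  change ε (algebraMap ℂ R t) = t
  simp

lemma dd_exact (n : ℕ) : (ShortComplex.mk (dd (n + 1)) (dd n) (dd_comp n)).Exact := by
  rw [ShortComplex.moduleCat_exact_iff]
  rcases n with _ | _ | _ | n
  · intro (v : Fin 3 → R) hv
    replace hv : Matrix.vecMul (m := Fin 3) (n := Fin 1) v !![x; y; z] = 0 := hv
    replace hv := congrFun hv 0
    simp [Matrix.vecMul, dotProduct, Fin.sum_univ_succ, ← add_assoc] at hv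
    obtain ⟨p, q, r, h1, h2, h3⟩ := ex2 _ _ _ hv
    refine ⟨(![p, q, r] : Fin 3 → R), ?_⟩
    change Matrix.vecMul (m := Fin 3) (n := Fin 3) ![p, q, r]
      !![y, x, -1; z, -1, x; 0, z, y] = v
    ext i
    fin_cases i
    · simp [Matrix.vecMul, dotProduct, Fin.sum_univ_succ, h1]
    · simp [Matrix.vecMul, dotProduct, Fin.sum_univ_succ, h2]; abel
    · simp [Matrix.vecMul, dotProduct, Fin.sum_univ_succ, h3]; abel
  · intro (v : Fin 3 → R) hv
    replace hv : Matrix.vecMul (m := Fin 3) (n := Fin 3) v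
      !![y, x, -1; z, -1, x; 0, z, y] = 0 := hv
    have hv0 := congrFun hv 0
    have hv1 := congrFun hv 1
    simp [Matrix.vecMul, dotProduct, Fin.sum_univ_succ] at hv0 hv1
    obtain ⟨r, h1, h2, h3⟩ := ex3 (v 0) (v 1) (v 2) hv0 (by rw [← hv1]; abel)
    refine ⟨(![r] : Fin 1 → R), ?_⟩
    change Matrix.vecMul (m := Fin 1) (n := Fin 3) ![r] !![z, y, x] = v
    ext i
    fin_cases i <;> simp [Matrix.vecMul, dotProduct, h1, h2, h3]
  · intro (v : Fin 1 → R) hv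
    replace hv : Matrix.vecMul (m := Fin 1) (n := Fin 3) v !![z, y, x] = 0 := hv
    have hv0 := congrFun hv 0
    simp [Matrix.vecMul, dotProduct] at hv0
    have h0 := F1 _ hv0
    refine ⟨0, ?_⟩
    rw [map_zero]
    change (0 : Fin 1 → R) = v
    ext i
    fin_cases i
    exact h0.symm
  · intro (v : Fin 0 → R) hv
    refine ⟨0, ?_⟩
    change _ = v
    exact Subsingleton.elim (α := Fin 0 → R) _ _

instance XX_proj (n : ℕ) : Projective (XX n) :=
  ModuleCat.projective_of_free (Pi.basisFun R (Fin (kk n)))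

lemma CC_d (n : ℕ) : CC.d (n + 1) n = dd n := ChainComplex.of_d _ _ _

lemma quasi_aux {A : Type 1} [Category.{0} A] [Abelian A] (K : ChainComplex A ℕ) (T : A)
    (π : K ⟶ (ChainComplex.single₀ A).obj T) (p : K.X 0 ⟶ T) (hp : π.f 0 = p)
    (w : K.d 1 0 ≫ p = 0) (h0 : (ShortComplex.mk (K.d 1 0) p w).Exact) (he : Epi p)
    (h : ∀ n, (ShortComplex.mk (K.d (n + 2) (n + 1)) (K.d (n + 1) n) (by simp)).Exact) :
    QuasiIso π := by
  subst hp
  refine ⟨fun n => ?_⟩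
  cases n with
  | zero =>
    rw [ChainComplex.quasiIsoAt₀_iff, ShortComplex.quasiIso_iff_of_zeros']
    · exact ⟨h0, he⟩
    · exact K.shape 0 0 (by simp)
    all_goals rfl
  | succ n =>
    rw [quasiIsoAt_iff_exactAt']
    · rw [HomologicalComplex.exactAt_iff' _ (n + 1 + 1) (n + 1) n (by simp) (by simp)]
      exact h n
    · apply ChainComplex.exactAt_succ_single_obj

/-- the augmentation, seen on the complex -/
noncomputable def augC : CC.X 0 ⟶ TT ε := aug ε

lemma augC_w (hx : ε x = 0) (hy : ε y = 0) (hz : ε z = 0) : CC.d 1 0 ≫ augC ε = 0 := by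
  rw [CC_d]; exact dd_aug ε hx hy hz

noncomputable def PP (hx : ε x = 0) (hy : ε y = 0) (hz : ε z = 0) :
    ProjectiveResolution (TT ε) where
  complex := CC
  projective n := XX_proj n
  π := (ChainComplex.toSingle₀Equiv _ _).symm ⟨augC ε, augC_w ε hx hy hz⟩
  quasiIso := by
    refine quasi_aux CC _ _ (augC ε) (by simp) (augC_w ε hx hy hz) ?_ (aug_epi ε) ?_
    · have h := aug_exact ε hx hy hz (dd_aug ε hx hy hz)
      simp only [← CC_d] at h
      exact h
    · intro n
      have h := dd_exact n
      simp only [← CC_d] at h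
      exact h

/-! ### Dimensions -/

lemma homology_finrank (S : ShortComplex (ModuleCat.{0} ℂ)) [Module.Finite ℂ S.X₂] :
    Module.finrank ℂ S.homology + Module.finrank ℂ (LinearMap.range S.f.hom) +
      Module.finrank ℂ (LinearMap.range S.g.hom) = Module.finrank ℂ S.X₂ := by
  rw [S.moduleCatHomologyIso.toLinearEquiv.finrank_eq]
  have h1 := Submodule.finrank_quotient_add_finrank (LinearMap.range S.moduleCatToCycles)
  have h2 := LinearMap.finrank_range_add_finrank_ker S.g.hom
  have h3 : Module.finrank ℂ (LinearMap.range S.moduleCatToCycles) =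
      Module.finrank ℂ (LinearMap.range S.f.hom) := by
    rw [← Submodule.finrank_map_subtype_eq, ← LinearMap.range_comp]
    rfl
  change Module.finrank ℂ (LinearMap.ker S.g.hom ⧸ LinearMap.range S.moduleCatToCycles) + _ + _ = _
  omega

noncomputable def KK : CochainComplex (ModuleCat ℂ) ℕ := CC.linearYonedaObj ℂ (TT ε)

noncomputable def EE (n : ℕ) : (KK ε).X n →ₗ[ℂ] (Fin (kk n) → ℂ) where
  toFun := fun (f : XX n ⟶ TT ε) i => (f.hom (Pi.single i (1 : R) : Fin (kk n) → R) : ℂ)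
  map_add' f g := rfl
  map_smul' c f := by
    ext i
    change ε (algebraMap ℂ R c) * _ = c * _
    simp; rfl

lemma EE_bij (n : ℕ) : Function.Bijective (EE ε n) := by
  constructor
  · intro (f : XX n ⟶ TT ε) (g : XX n ⟶ TT ε) h
    refine ModuleCat.hom_ext ?_
    refine (Pi.basisFun R (Fin (kk n))).ext fun i => ?_
    rw [Pi.basisFun_apply]
    exact congrFun h i
  · intro v
    let b : Module.Basis (Fin (kk n)) R (XX n) := Pi.basisFun R (Fin (kk n))
    let f : XX n →ₗ[R] TT ε := b.constr ℕ (fun i => (v i : ℂ))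
    refine ⟨ConcreteCategory.ofHom (C := ModuleCat R) f, ?_⟩
    ext i
    have h1 : (Pi.single i (1 : R) : Fin (kk n) → R) = b i := (Pi.basisFun_apply R _ i).symm
    change f (Pi.single i (1 : R) : Fin (kk n) → R) = v i
    rw [h1]
    exact b.constr_basis ℕ _ i

lemma eval_sum {k : ℕ} (f : (Fin k → R) →ₗ[R] TT ε) (v : Fin k → R) :
    (show ℂ from f v) = ∑ j, ε (v j) * (show ℂ from f (Pi.single j (1 : R))) := by
  have h : f v = ∑ j, f (Pi.single j (v j)) := by
    conv_lhs => rw [← Finset.univ_sum_single v, map_sum]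
  refine Eq.trans h ?_
  refine Finset.sum_congr rfl fun j _ => ?_
  have : (Pi.single j (v j) : Fin k → R) = v j • Pi.single j (1 : R) := by
    rw [← Pi.single_smul, smul_eq_mul, mul_one]
  rw [this, map_smul]
  rfl

lemma EE_d (n : ℕ) (f : (KK ε).X n) :
    EE ε (n + 1) ((KK ε).d n (n + 1) f) = ((MM n).map ε).mulVec (EE ε n f) := by
  have h : (KK ε).d n (n + 1) f = (CC.d (n + 1) n ≫ (f : CC.X n ⟶ TT ε) : CC.X (n + 1) ⟶ TT ε) := rfl
  rw [h, CC_d]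
  ext i
  have h1 : Matrix.vecMul (Pi.single i (1 : R)) (MM n) = MM n i := Matrix.single_one_vecMul _ _
  change (ModuleCat.Hom.hom (f : XX n ⟶ TT ε)) (Matrix.vecMul (Pi.single i (1 : R)) (MM n)) = _
  rw [h1]
  exact eval_sum ε (ModuleCat.Hom.hom (f : XX n ⟶ TT ε)) (MM n i)

noncomputable def EEq (n : ℕ) : (KK ε).X n ≃ₗ[ℂ] (Fin (kk n) → ℂ) :=
  LinearEquiv.ofBijective (EE ε n) (EE_bij ε n)

noncomputable def rk (i j : ℕ) : ℕ := Module.finrank ℂ (LinearMap.range ((KK ε).d i j).hom)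

lemma rk_eq (n : ℕ) : rk ε n (n + 1) =
    Module.finrank ℂ (LinearMap.range ((MM n).map ε).mulVecLin) := by
  have h : (EEq ε (n + 1)).toLinearMap ∘ₗ ((KK ε).d n (n + 1)).hom =
      ((MM n).map ε).mulVecLin ∘ₗ (EEq ε n).toLinearMap :=
    LinearMap.ext fun f => EE_d ε n f
  have h2 := congrArg LinearMap.range h
  rw [LinearMap.range_comp, LinearMap.range_comp_of_range_eq_top _ (LinearEquiv.range _)] at h2
  rw [← h2, LinearEquiv.finrank_map_eq]
  rfl

lemma dim_eq (n : ℕ) : Module.finrank ℂ ((KK ε).X n) = kk n := by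
  rw [(EEq ε n).finrank_eq]; simp

instance (n : ℕ) : Module.Finite ℂ ((KK ε).X n) := Module.Finite.equiv (EEq ε n).symm

lemma h_eq (n : ℕ) : Module.finrank ℂ ((KK ε).homology n) +
    rk ε ((ComplexShape.up ℕ).prev n) n + rk ε n (n + 1) = kk n := by
  have h0 : (ComplexShape.up ℕ).next n = n + 1 := by simp
  haveI : Module.Finite ℂ ((KK ε).sc n).X₂ := inferInstanceAs (Module.Finite ℂ ((KK ε).X n))
  have := homology_finrank ((KK ε).sc n)
  rw [← dim_eq ε n]
  conv_lhs => rw [← h0]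
  exact this

lemma rk00 : rk ε ((ComplexShape.up ℕ).prev 0) 0 = 0 := by
  have h : (KK ε).d ((ComplexShape.up ℕ).prev 0) 0 = 0 := (KK ε).shape _ _ (by simp)
  rw [rk, h]
  change Module.finrank ℂ (LinearMap.range (0 : _ →ₗ[ℂ] _)) = 0
  rw [LinearMap.range_zero, finrank_bot]

lemma rk_zero (n : ℕ) (h : (MM n).map ε = 0) : rk ε n (n + 1) = 0 := by
  rw [rk_eq, h, Matrix.mulVecLin_zero, LinearMap.range_zero, finrank_bot]

lemma prev_succ (n : ℕ) : (ComplexShape.up ℕ).prev (n + 1) = n := by simp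

section
variable (hx : ε x = 0) (hy : ε y = 0) (hz : ε z = 0)

lemma rk0 (hx : ε x = 0) (hy : ε y = 0) (hz : ε z = 0) : rk ε 0 1 = 0 := by
  apply rk_zero
  change (!![x; y; z] : Matrix (Fin 3) (Fin 1) R).map ε = 0
  ext i j
  fin_cases i <;> fin_cases j <;> simp [hx, hy, hz]

lemma rk2 (hx : ε x = 0) (hy : ε y = 0) (hz : ε z = 0) : rk ε 2 3 = 0 := by
  apply rk_zero
  change (!![z, y, x] : Matrix (Fin 1) (Fin 3) R).map ε = 0
  ext i j
  fin_cases i <;> fin_cases j <;> simp [hx, hy, hz]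

lemma rk3 (n : ℕ) : rk ε (n + 3) (n + 4) = 0 := by
  apply rk_zero
  ext i j
  exact map_zero ε

lemma rk1 (hx : ε x = 0) (hy : ε y = 0) (hz : ε z = 0) : rk ε 1 2 = 2 := by
  rw [rk_eq]
  change Module.finrank ℂ (LinearMap.range
    ((!![y, x, -1; z, -1, x; 0, z, y] : Matrix (Fin 3) (Fin 3) R).map ε).mulVecLin) = 2
  have h : LinearMap.range
    ((!![y, x, -1; z, -1, x; 0, z, y] : Matrix (Fin 3) (Fin 3) R).map ε).mulVecLin =
      LinearMap.ker (LinearMap.proj 2 : (Fin 3 → ℂ) →ₗ[ℂ] ℂ) := by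
    ext v
    rw [LinearMap.mem_range, LinearMap.mem_ker, LinearMap.proj_apply]
    constructor
    · rintro ⟨w, rfl⟩
      simp [Matrix.mulVec, dotProduct, Fin.sum_univ_succ, hx, hy, hz]
    · intro h
      refine ⟨![0, - v 1, - v 0], ?_⟩
      ext i
      fin_cases i <;> simp [Matrix.mulVec, dotProduct, Fin.sum_univ_succ, hx, hy, hz, h]
  rw [h]
  have h2 := LinearMap.finrank_range_add_finrank_ker (LinearMap.proj 2 : (Fin 3 → ℂ) →ₗ[ℂ] ℂ)
  rw [LinearMap.range_eq_top.2 (LinearMap.proj_surjective 2)] at h2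
  simp at h2
  omega
end

lemma main (hx : ε x = 0) (hy : ε y = 0) (hz : ε z = 0) (n : ℕ) :
    extDim R ε n = Module.finrank ℂ ((KK ε).homology n) :=
  ((PP ε hx hy hz).isoExt (R := ℂ) n (TT ε)).toLinearEquiv.finrank_eq

lemma final (hx : ε x = 0) (hy : ε y = 0) (hz : ε z = 0) :
    extDim R ε 0 = 1 ∧ extDim R ε 1 = 1 ∧ extDim R ε 2 = 1 ∧ extDim R ε 3 = 1 ∧
    ∀ n ≥ 4, extDim R ε n = 0 := by
  have e0 := h_eq ε 0
  have e1 := h_eq ε 1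
  have e2 := h_eq ε 2
  have e3 := h_eq ε 3
  rw [rk00] at e0
  rw [prev_succ 0] at e1
  rw [prev_succ 1] at e2
  rw [prev_succ 2] at e3
  have r0 := rk0 ε hx hy hz
  have r1 := rk1 ε hx hy hz
  have r2 := rk2 ε hx hy hz
  have r3 := rk3 ε 0
  simp only [kk, Nat.reduceAdd, zero_add] at e0 e1 e2 e3 r3
  simp only [main ε hx hy hz]
  refine ⟨by omega, by omega, by omega, by omega, fun n hn => ?_⟩
  obtain ⟨m, rfl⟩ := Nat.exists_eq_add_of_le' hn
  have := h_eq ε (m + 4)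
  simp only [kk] at this
  omega

end Hom
end Col
theorem betti_numbers (ε : RingQuot CRel →ₐ[ℂ] ℂ)
    (hε : ∀ i : Fin 3, ε (RingQuot.mkAlgHom ℂ CRel (ι ℂ i)) = 0) :
    extDim (RingQuot CRel) ε 0 = 1 ∧ extDim (RingQuot CRel) ε 1 = 1 ∧
    extDim (RingQuot CRel) ε 2 = 1 ∧ extDim (RingQuot CRel) ε 3 = 1 ∧
    ∀ n ≥ 4, extDim (RingQuot CRel) ε n = 0 := by
  exact Col.final ε (hε 0) (hε 1) (hε 2)
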